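/- arXiv:1908.05283 — 6 statements merged into one kernel-verified Lean document; each statement's English description precedes it below -/
import Mathlib

section
/- Let v : Ω → ℝ satisfy ((H + K·I)v)(α) ≥ 0 for every α ∈ Ω. Then v(α) ≥ 0 for every α ∈ Ω. (Discrete maximum principle for the Fock-space Hamiltonian; Lemma 1, nonnegativity part.) -/
open Matrix Finset

/-! At a minimiser `i` of `v`, a matrix `M` with nonpositive off-diagonal entries satisfies
`(M *ᵥ v) i ≤ (∑ j, M i j) * v i`, so `0 ≤ M *ᵥ v` and positive row sums force `0 ≤ v i`. The rows
of `H + K·I` are of this kind, with sums `K + V α - t * deg α ≥ t`. -/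

section NonposOffDiagonal

variable {n R : Type*} [Fintype n] [Ring R] {M : Matrix n n R} {v : n → R}

theorem mulVec_apply_le_sum_row_mul [PartialOrder R] [IsOrderedRing R] {i : n}
    (hM : ∀ j, i ≠ j → M i j ≤ 0) (hi : ∀ j, v i ≤ v j) :
    (M *ᵥ v) i ≤ (∑ j, M i j) * v i := by
  rw [mulVec, dotProduct, sum_mul]
  refine sum_le_sum fun j _ => ?_
  obtain rfl | hij := eq_or_ne i j
  · exact le_rfl
  · exact mul_le_mul_of_nonpos_left (hi j) (hM j hij)

theorem nonneg_of_mulVec_nonneg_of_sum_row_pos [LinearOrder R] [IsStrictOrderedRing R]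
    (hM : ∀ i j, i ≠ j → M i j ≤ 0) (hrow : ∀ i, 0 < ∑ j, M i j)
    (hv : ∀ i, 0 ≤ (M *ᵥ v) i) (i : n) : 0 ≤ v i := by
  have : Nonempty n := ⟨i⟩
  obtain ⟨m, hm⟩ := Finite.exists_min v
  have hmul : 0 ≤ (∑ j, M m j) * v m :=
    (hv m).trans (mulVec_apply_le_sum_row_mul (hM m) hm)
  exact (nonneg_of_mul_nonneg_right hmul (hrow m)).trans (hm i)

end NonposOffDiagonal

section HoppingHamiltonian

variable {Ω R : Type*} [DecidableEq Ω] [Ring R]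
  (G : SimpleGraph Ω) [DecidableRel G.Adj] (t : R) (V : Ω → R)

/-- The Hamiltonian of a particle hopping along the edges of `G` with amplitude `t` in the
potential `V`; the hopping terms enter with sign `-t`. -/
def hoppingHamiltonian : Matrix Ω Ω R :=
  diagonal V - t • G.adjMatrix R

theorem hoppingHamiltonian_apply (α β : Ω) :
    hoppingHamiltonian G t V α β = if α = β then V α else if G.Adj α β then -t else 0 := by
  obtain rfl | hne := eq_or_ne α β
  · simp [hoppingHamiltonian]
  · by_cases hadj : G.Adj α β <;> simp [hoppingHamiltonian, hne, hadj]

theorem hoppingHamiltonian_add_smul_one (K : R) :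
    hoppingHamiltonian G t V + K • (1 : Matrix Ω Ω R) =
      hoppingHamiltonian G t (fun α => V α + K) := by
  rw [hoppingHamiltonian, hoppingHamiltonian, smul_one_eq_diagonal, sub_add_eq_add_sub,
    diagonal_add]

theorem sum_row_hoppingHamiltonian [Fintype Ω] (α : Ω) :
    ∑ β, hoppingHamiltonian G t V α β = V α - t * G.degree α := by
  have hdiagonal : ∑ β, diagonal V α β = V α := by simp [diagonal_apply]
  have hadj : ∑ β, G.adjMatrix R α β = G.degree α := by
    simp [SimpleGraph.adjMatrix_apply, ← G.card_neighborFinset_eq_degree,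
      G.neighborFinset_eq_filter]
  simp only [hoppingHamiltonian, Matrix.sub_apply, Matrix.smul_apply, smul_eq_mul,
    sum_sub_distrib, ← mul_sum, hdiagonal, hadj]

variable {G t} in
theorem hoppingHamiltonian_apply_nonpos_of_ne [PartialOrder R] [IsOrderedRing R]
    (ht : 0 ≤ t) {α β : Ω} (hne : α ≠ β) : hoppingHamiltonian G t V α β ≤ 0 := by
  rw [hoppingHamiltonian_apply, if_neg hne]
  split_ifs
  · exact neg_nonpos.mpr ht
  · exact le_rfl

end HoppingHamiltonian

theorem mbll_maximum_principle_general
    {Ω R : Type*} [Fintype Ω] [DecidableEq Ω] [Ring R] [LinearOrder R] [IsStrictOrderedRing R]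
    (G : SimpleGraph Ω) [DecidableRel G.Adj] {t : R} (ht : 0 ≤ t) (V : Ω → R) (K : R)
    (hK : ∀ α, t * G.degree α < V α + K) (v : Ω → R)
    (hv : ∀ α, 0 ≤ ((hoppingHamiltonian G t V + K • (1 : Matrix Ω Ω R)) *ᵥ v) α) (α : Ω) :
    0 ≤ v α := by
  rw [hoppingHamiltonian_add_smul_one] at hv
  refine nonneg_of_mulVec_nonneg_of_sum_row_pos
    (fun _ _ => hoppingHamiltonian_apply_nonpos_of_ne _ ht) (fun β => ?_) hv α
  rw [sum_row_hoppingHamiltonian]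
  exact sub_pos.mpr (hK β)

/-- **Discrete maximum principle for the Fock-space Hamiltonian** (Lemma 1, nonnegativity part):
if `((H + K·I) v) α ≥ 0` for all `α`, then `v α ≥ 0` for all `α`. -/
theorem mbll_maximum_principle
    {Ω : Type*} [Fintype Ω] [DecidableEq Ω] [Nonempty Ω]
    (G : SimpleGraph Ω) [DecidableRel G.Adj] (hG : G.Connected)
    (t : ℝ) (ht : 0 < t) (V : Ω → ℝ) (K : ℝ)
    (H : Matrix Ω Ω ℝ)
    (hH : ∀ α β, H α β = if α = β then V α else if G.Adj α β then -t else 0)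
    (hK : ∀ α, 0 ≤ K + V α - t * (G.degree α + 1))
    (v : Ω → ℝ)
    (hv : ∀ α, 0 ≤ ((H + K • (1 : Matrix Ω Ω ℝ)) *ᵥ v) α) :
    ∀ α, 0 ≤ v α := by
  obtain rfl : H = hoppingHamiltonian G t V :=
    Matrix.ext fun α β => (hH α β).trans (hoppingHamiltonian_apply G t V α β).symm
  exact mbll_maximum_principle_general G ht.le V K (fun α => by linarith [hK α]) v hv
end

section
/- The matrix H + K·I is invertible, and every entry of its inverse is strictly positive: ((H + K·I)⁻¹)(α,β) > 0 for all α, β ∈ Ω. (Lemma 2.) -/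
open Matrix Finset

/-!
Let `A` be a Z-matrix, and let `x ≥ 0` satisfy `A x ≥ 0`. If `x i = 0`, then `(A x) i ≤ 0`, with
strict inequality as soon as `x j > 0` for some `j` with `A i j < 0`. So zeros of `x` propagate
along the negative entries of `A`, and `x i > 0` whenever `i` is linked to some `j` with
`(A x) j > 0`. This strong minimum principle is used twice: applied to `x - min x`, it shows that
`A x ≥ 0` implies `x ≥ 0`, so `A` is injective; applied to the columns of `A⁻¹`, whose images are
the basis vectors, it gives positivity. The shifted Hamiltonian is the Laplacian of `G` scaled by
`t` plus a nonnegative diagonal matrix, and its negative entries are the edges of `G`.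
-/

section ZMatrix

variable {n R : Type*}

/-- A Z-matrix: all off-diagonal entries are nonpositive. -/
def IsZMatrix [Zero R] [LE R] (A : Matrix n n R) : Prop :=
  Pairwise fun i j => A i j ≤ 0

/-- Reachability in the directed graph of the negative entries of a matrix; for a Z-matrix these
are, off the diagonal, exactly the nonzero entries. Every index is linked to itself. -/
def NegLinked [Zero R] [LT R] (A : Matrix n n R) : n → n → Prop :=
  Relation.ReflTransGen fun i j => A i j < 0

/-- Weakly chained diagonal dominance for Z-matrices: all row sums, written as the entries of
`A *ᵥ 1`, are nonnegative, and every row is linked to one whose sum is positive. For a Z-matrix,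
a row sum is the diagonal entry minus the absolute values of the other entries. -/
structure IsWeaklyChainedDominant [Fintype n] [NonAssocSemiring R] [Preorder R]
    (A : Matrix n n R) : Prop where
  rowSum_nonneg : 0 ≤ A *ᵥ 1
  exists_negLinked_rowSum_pos : ∀ i, ∃ j, NegLinked A i j ∧ 0 < (A *ᵥ 1) j

namespace IsZMatrix

section Ring

variable [Ring R] [LinearOrder R] [IsStrictOrderedRing R] {A : Matrix n n R} {x : n → R} {i j : n}

theorem mul_nonpos_of_eq_zero (hA : IsZMatrix A) (hx : 0 ≤ x) (hi : x i = 0) (k : n) :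
    A i k * x k ≤ 0 := by
  rcases eq_or_ne i k with rfl | hik
  · simp [hi]
  · exact mul_nonpos_of_nonpos_of_nonneg (hA hik) (hx k)

variable [Fintype n]

theorem mulVec_nonpos_of_eq_zero (hA : IsZMatrix A) (hx : 0 ≤ x) (hi : x i = 0) :
    (A *ᵥ x) i ≤ 0 :=
  sum_nonpos fun k _ => hA.mul_nonpos_of_eq_zero hx hi k

theorem eq_zero_of_neg (hA : IsZMatrix A) (hx : 0 ≤ x) (hAx : 0 ≤ A *ᵥ x) (hij : A i j < 0)
    (hi : x i = 0) : x j = 0 := by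
  by_contra hj
  have hterm : A i j * x j < 0 := mul_neg_of_neg_of_pos hij ((hx j).lt_of_ne' hj)
  have hsum : (A *ᵥ x) i < 0 :=
    sum_neg' (fun k _ => hA.mul_nonpos_of_eq_zero hx hi k) ⟨j, mem_univ j, hterm⟩
  exact hsum.not_ge (hAx i)

theorem eq_zero_of_negLinked (hA : IsZMatrix A) (hx : 0 ≤ x) (hAx : 0 ≤ A *ᵥ x)
    (hij : NegLinked A i j) (hi : x i = 0) : x j = 0 := by
  induction hij with
  | refl => exact hi
  | tail _ hneg ih => exact hA.eq_zero_of_neg hx hAx hneg ih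

theorem pos_of_negLinked (hA : IsZMatrix A) (hx : 0 ≤ x) (hAx : 0 ≤ A *ᵥ x)
    (hij : NegLinked A i j) (hj : 0 < (A *ᵥ x) j) : 0 < x i :=
  (hx i).lt_of_ne' fun hi =>
    hj.not_ge (hA.mulVec_nonpos_of_eq_zero hx (hA.eq_zero_of_negLinked hx hAx hij hi))

theorem nonneg_of_mulVec_nonneg (hA : IsZMatrix A) (hdom : IsWeaklyChainedDominant A)
    (hAx : 0 ≤ A *ᵥ x) : 0 ≤ x := by
  intro k
  have : Nonempty n := ⟨k⟩
  obtain ⟨a, ha⟩ := Finite.exists_min x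
  suffices 0 ≤ x a from this.trans (ha k)
  by_contra! hneg
  obtain ⟨j, haj, hj⟩ := hdom.exists_negLinked_rowSum_pos a
  let y : n → R := fun i => x i - x a
  have hAy (i : n) : (A *ᵥ y) i = (A *ᵥ x) i + (A *ᵥ 1) i * -x a := by
    simp [y, mulVec, dotProduct, mul_add, sum_add_distrib, sum_mul, sub_eq_add_neg]
  have hy : 0 ≤ y := fun i => sub_nonneg.mpr (ha i)
  have hAy_nonneg : 0 ≤ A *ᵥ y := fun i => (hAy i).symm ▸
    add_nonneg (hAx i) (mul_nonneg (hdom.rowSum_nonneg i) (neg_pos.mpr hneg).le)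
  have hAy_pos : 0 < (A *ᵥ y) j := (hAy j).symm ▸
    add_pos_of_nonneg_of_pos (hAx j) (mul_pos hj (neg_pos.mpr hneg))
  exact (hA.pos_of_negLinked hy hAy_nonneg haj hAy_pos).ne' (sub_self (x a))

theorem mulVec_injective (hA : IsZMatrix A) (hdom : IsWeaklyChainedDominant A) :
    Function.Injective A.mulVec := by
  have le_of_eq {x y : n → R} (hxy : A *ᵥ x = A *ᵥ y) : x ≤ y :=
    sub_nonneg.mp <| hA.nonneg_of_mulVec_nonneg hdom (by rw [mulVec_sub, hxy, sub_self])
  exact fun x y hxy => (le_of_eq hxy).antisymm (le_of_eq hxy.symm)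

end Ring

variable [Fintype n] [DecidableEq n] [Field R] [LinearOrder R] [IsStrictOrderedRing R]
  {A : Matrix n n R} {i j : n}

theorem isUnit (hA : IsZMatrix A) (hdom : IsWeaklyChainedDominant A) : IsUnit A :=
  mulVec_injective_iff_isUnit.mp (hA.mulVec_injective hdom)

theorem inv_pos_of_negLinked (hA : IsZMatrix A) (hdom : IsWeaklyChainedDominant A)
    (hij : NegLinked A i j) : 0 < A⁻¹ i j := by
  have hcol : A *ᵥ A⁻¹.col j = Pi.single j 1 := by
    rw [← mulVec_single_one, mulVec_mulVec,
      mul_nonsing_inv A ((isUnit_iff_isUnit_det A).mp (hA.isUnit hdom)), one_mulVec]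
  have hcol_nonneg : 0 ≤ A *ᵥ A⁻¹.col j := hcol ▸ Pi.single_nonneg.mpr zero_le_one
  have hcol_pos : 0 < (A *ᵥ A⁻¹.col j) j := by simp [hcol]
  have hinv_nonneg : 0 ≤ A⁻¹.col j := hA.nonneg_of_mulVec_nonneg hdom hcol_nonneg
  change 0 < A⁻¹.col j i
  exact hA.pos_of_negLinked hinv_nonneg hcol_nonneg hij hcol_pos

end IsZMatrix

end ZMatrix

section Laplacian

variable {Ω R : Type*} [Fintype Ω] [DecidableEq Ω] (G : SimpleGraph Ω) [DecidableRel G.Adj]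

theorem diagonal_add_smul_lapMatrix_apply_of_ne [Ring R] (c : Ω → R) (t : R) {α β : Ω}
    (hαβ : α ≠ β) :
    (diagonal c + t • G.lapMatrix R) α β = if G.Adj α β then -t else 0 := by
  split_ifs <;> simp [SimpleGraph.lapMatrix, SimpleGraph.degMatrix, *]

theorem diagonal_add_smul_lapMatrix_mulVec_one [Ring R] (c : Ω → R) (t : R) :
    (diagonal c + t • G.lapMatrix R) *ᵥ 1 = c := by
  have hlap : G.lapMatrix R *ᵥ 1 = 0 := G.lapMatrix_mulVec_const_eq_zero
  ext α
  simp [add_mulVec, smul_mulVec, hlap, mulVec_diagonal]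

variable {G} {c : Ω → R} {t : R}

section Ring

variable [Ring R] [LinearOrder R] [IsStrictOrderedRing R]

theorem isZMatrix_diagonal_add_smul_lapMatrix (ht : 0 ≤ t) :
    IsZMatrix (diagonal c + t • G.lapMatrix R) := by
  intro α β hαβ
  rw [diagonal_add_smul_lapMatrix_apply_of_ne G c t hαβ]
  split_ifs
  exacts [neg_nonpos.mpr ht, le_rfl]

theorem negLinked_diagonal_add_smul_lapMatrix (ht : 0 < t) {α β : Ω} (hαβ : G.Reachable α β) :
    NegLinked (diagonal c + t • G.lapMatrix R) α β := by
  refine Relation.ReflTransGen.mono (fun γ δ hadj => ?_) α β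
    ((G.reachable_iff_reflTransGen α β).mp hαβ)
  rw [diagonal_add_smul_lapMatrix_apply_of_ne G c t hadj.ne, if_pos hadj]
  exact neg_neg_of_pos ht

theorem isWeaklyChainedDominant_diagonal_add_smul_lapMatrix (hG : G.Preconnected) (ht : 0 < t)
    (hc : 0 < c) : IsWeaklyChainedDominant (diagonal c + t • G.lapMatrix R) := by
  obtain ⟨hc_nonneg, γ, hγ⟩ := Pi.lt_def.mp hc
  rw [← diagonal_add_smul_lapMatrix_mulVec_one G c t] at hc_nonneg hγ
  exact ⟨hc_nonneg, fun α => ⟨γ, negLinked_diagonal_add_smul_lapMatrix ht (hG α γ), hγ⟩⟩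

end Ring

variable [Field R] [LinearOrder R] [IsStrictOrderedRing R]

theorem isUnit_diagonal_add_smul_lapMatrix (hG : G.Preconnected) (ht : 0 < t) (hc : 0 < c) :
    IsUnit (diagonal c + t • G.lapMatrix R) :=
  (isZMatrix_diagonal_add_smul_lapMatrix ht.le).isUnit
    (isWeaklyChainedDominant_diagonal_add_smul_lapMatrix hG ht hc)

theorem inv_diagonal_add_smul_lapMatrix_pos (hG : G.Preconnected) (ht : 0 < t) (hc : 0 < c)
    (α β : Ω) : 0 < (diagonal c + t • G.lapMatrix R)⁻¹ α β :=
  (isZMatrix_diagonal_add_smul_lapMatrix ht.le).inv_pos_of_negLinked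
    (isWeaklyChainedDominant_diagonal_add_smul_lapMatrix hG ht hc)
    (negLinked_diagonal_add_smul_lapMatrix ht (hG α β))

end Laplacian

theorem hamiltonian_add_smul_one_eq {Ω R : Type*} [Fintype Ω] [DecidableEq Ω]
    (G : SimpleGraph Ω) [DecidableRel G.Adj] [Ring R] (t : R) (V : Ω → R) (K : R)
    (H : Matrix Ω Ω R)
    (hH : ∀ α β, H α β = if α = β then V α else if G.Adj α β then -t else 0) :
    H + K • (1 : Matrix Ω Ω R) =
      diagonal (fun α => K + V α - t * G.degree α) + t • G.lapMatrix R := by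
  ext α β
  rcases eq_or_ne α β with rfl | hαβ
  · simp [hH, SimpleGraph.lapMatrix, SimpleGraph.degMatrix, add_comm]
  · rw [diagonal_add_smul_lapMatrix_apply_of_ne G _ t hαβ]
    simp [hH, hαβ]

theorem mbll_inverse_entrywise_positive_general
    {Ω R : Type*} [Fintype Ω] [DecidableEq Ω] [Field R] [LinearOrder R] [IsStrictOrderedRing R]
    (G : SimpleGraph Ω) [DecidableRel G.Adj] (hG : G.Preconnected)
    (t : R) (ht : 0 < t) (V : Ω → R) (K : R)
    (H : Matrix Ω Ω R)
    (hH : ∀ α β, H α β = if α = β then V α else if G.Adj α β then -t else 0)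
    (hK : ∀ α, 0 ≤ K + V α - t * G.degree α) (hK_pos : ∃ α, 0 < K + V α - t * G.degree α) :
    IsUnit (H + K • (1 : Matrix Ω Ω R)) ∧
      ∀ α β, 0 < (H + K • (1 : Matrix Ω Ω R))⁻¹ α β := by
  have hc : 0 < fun α => K + V α - t * G.degree α := Pi.lt_def.mpr ⟨hK, hK_pos⟩
  rw [hamiltonian_add_smul_one_eq G t V K H hH]
  exact ⟨isUnit_diagonal_add_smul_lapMatrix hG ht hc,
    inv_diagonal_add_smul_lapMatrix_pos hG ht hc⟩

/-- **Lemma 2**: the matrix `H + K·I` is invertible and every entry of its inverse is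
strictly positive. -/
theorem mbll_inverse_entrywise_positive
    {Ω : Type*} [Fintype Ω] [DecidableEq Ω] [Nonempty Ω]
    (G : SimpleGraph Ω) [DecidableRel G.Adj] (hG : G.Connected)
    (t : ℝ) (ht : 0 < t) (V : Ω → ℝ) (K : ℝ)
    (H : Matrix Ω Ω ℝ)
    (hH : ∀ α β, H α β = if α = β then V α else if G.Adj α β then -t else 0)
    (hK : ∀ α, 0 ≤ K + V α - t * (G.degree α + 1)) :
    IsUnit (H + K • (1 : Matrix Ω Ω ℝ)) ∧
      ∀ α β, 0 < (H + K • (1 : Matrix Ω Ω ℝ))⁻¹ α β := by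
  have hrow (α : Ω) : 0 < K + V α - t * G.degree α := by linarith [hK α]
  exact mbll_inverse_entrywise_positive_general G hG.preconnected t ht V K H hH
    (fun α => (hrow α).le) ⟨Classical.arbitrary Ω, hrow _⟩
end

section
/- Let ψ : Ω → ℝ be an eigenvector of H with eigenvalue E and set E' := E + K. Then for every α ∈ Ω, −t·Σ_{β adjacent to α} u(α)·u(β)·(ψ(β)/u(β) − ψ(α)/u(α)) + ψ(α) = E'·u(α)·ψ(α). (The eigenvalue equation rewritten in landscape form: a weighted graph Laplacian with weights u(α)u(β) acting on ψ/u, with effective potential 1/u.) -/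
open Matrix Finset

/-!
The function `β ↦ u α * u β * (ψ β / u β - ψ α / u α)` is the linear combination
`u α • ψ - ψ α • u`, which vanishes at `α`. Evaluated at `α`, a Schrödinger operator applied to it
therefore reduces to its hopping term, while by linearity it equals
`u α * (H ψ) α - ψ α * (H u) α`. The eigenvalue equation and `(H + K) u = 1` evaluate the latter.
-/

/-- The Schrödinger operator with hopping amplitude `t` and potential `V` on a locally finite
graph, acting on all functions. The hopping term is `-t` times the sum over neighbours, without a
degree term: on a finite graph this is the operator of the Fock-space Hamiltonian matrix. -/
def schroedingerOperator {Ω R : Type*} [CommRing R] (G : SimpleGraph Ω) [G.LocallyFinite]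
    (t : R) (V : Ω → R) : (Ω → R) →ₗ[R] (Ω → R) where
  toFun f α := V α * f α - t * ∑ β ∈ G.neighborFinset α, f β
  map_add' f g := by
    ext α
    simp only [Pi.add_apply, sum_add_distrib]
    ring
  map_smul' c f := by
    ext α
    simp only [Pi.smul_apply, smul_eq_mul, ← mul_sum, RingHom.id_apply]
    ring

theorem schroedingerOperator_apply {Ω R : Type*} [CommRing R] (G : SimpleGraph Ω)
    [G.LocallyFinite] (t : R) (V f : Ω → R) (α : Ω) :
    schroedingerOperator G t V f α = V α * f α - t * ∑ β ∈ G.neighborFinset α, f β :=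
  rfl

theorem mulVec_eq_schroedingerOperator {Ω R : Type*} [Fintype Ω] [DecidableEq Ω] [CommRing R]
    {G : SimpleGraph Ω} [DecidableRel G.Adj] {t : R} {V : Ω → R} {H : Matrix Ω Ω R}
    (hH : ∀ α β, H α β = if α = β then V α else if G.Adj α β then -t else 0) (f : Ω → R) :
    H *ᵥ f = schroedingerOperator G t V f := by
  have H_eq : H = diagonal V - t • G.adjMatrix R := by
    ext α β
    by_cases hαβ : α = β
    · simp [hH, hαβ]
    · by_cases hadj : G.Adj α β <;> simp [hH, hαβ, hadj]
  ext α
  simp only [H_eq, sub_mulVec, smul_mulVec, Pi.sub_apply, Pi.smul_apply, smul_eq_mul,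
    mulVec_diagonal, SimpleGraph.adjMatrix_mulVec_apply, schroedingerOperator_apply]

theorem mulVec_inv_mulVec_of_ne_zero {n R : Type*} [Fintype n] [DecidableEq n] [CommRing R]
    {A : Matrix n n R} {b : n → R} (h : A⁻¹ *ᵥ b ≠ 0) : A *ᵥ (A⁻¹ *ᵥ b) = b := by
  -- `A⁻¹` is the junk value `0` when `A` is singular.
  have isUnit_det : IsUnit A.det := by
    by_contra hdet
    exact h (by rw [nonsing_inv_apply_not_isUnit A hdet, zero_mulVec])
  rw [mulVec_mulVec, mul_nonsing_inv A isUnit_det, one_mulVec]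

theorem schroedingerOperator_add_smul_eq_of_eq_inv_mulVec {Ω R : Type*} [Fintype Ω]
    [DecidableEq Ω] [CommRing R] {G : SimpleGraph Ω} [DecidableRel G.Adj] {t K : R} {V : Ω → R}
    {H : Matrix Ω Ω R}
    (hH : ∀ α β, H α β = if α = β then V α else if G.Adj α β then -t else 0)
    {u b : Ω → R} (hu : u = (H + K • (1 : Matrix Ω Ω R))⁻¹ *ᵥ b) (hu_ne : u ≠ 0) :
    schroedingerOperator G t V u + K • u = b := by
  have shifted_mulVec : (H + K • (1 : Matrix Ω Ω R)) *ᵥ u = b := by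
    subst hu
    exact mulVec_inv_mulVec_of_ne_zero hu_ne
  rwa [add_mulVec, smul_mulVec, one_mulVec, mulVec_eq_schroedingerOperator hH] at shifted_mulVec

section Field

variable {Ω 𝕜 : Type*} [Field 𝕜] (G : SimpleGraph Ω) [G.LocallyFinite] (t : 𝕜) (V : Ω → 𝕜)

theorem neg_mul_sum_weighted_sub_eq_schroedingerOperator {u : Ω → 𝕜} (hu : ∀ α, u α ≠ 0)
    (ψ : Ω → 𝕜) (α : Ω) :
    -t * ∑ β ∈ G.neighborFinset α, u α * u β * (ψ β / u β - ψ α / u α)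
      = u α * schroedingerOperator G t V ψ α - ψ α * schroedingerOperator G t V u α := by
  have weighted_sub (β : Ω) :
      u α * u β * (ψ β / u β - ψ α / u α) = (u α • ψ - ψ α • u) β := by
    have := hu α
    have := hu β
    simp only [Pi.sub_apply, Pi.smul_apply, smul_eq_mul]
    field_simp
  have vanishes_at : (u α • ψ - ψ α • u) α = 0 := by
    simp only [Pi.sub_apply, Pi.smul_apply, smul_eq_mul, mul_comm, sub_self]
  calc -t * ∑ β ∈ G.neighborFinset α, u α * u β * (ψ β / u β - ψ α / u α)
      = schroedingerOperator G t V (u α • ψ - ψ α • u) α := by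
        rw [schroedingerOperator_apply, vanishes_at, mul_zero, zero_sub, neg_mul]
        simp only [weighted_sub]
    _ = u α * schroedingerOperator G t V ψ α - ψ α * schroedingerOperator G t V u α := by
        simp only [map_sub, map_smul, Pi.sub_apply, Pi.smul_apply, smul_eq_mul]

theorem mbll_landscape_schroedinger_form_general {K E : 𝕜} {u ψ : Ω → 𝕜}
    (hu : schroedingerOperator G t V u + K • u = 1) (hu_ne : ∀ α, u α ≠ 0)
    (hψ : schroedingerOperator G t V ψ = E • ψ) (α : Ω) :
    -t * ∑ β ∈ G.neighborFinset α, u α * u β * (ψ β / u β - ψ α / u α) + ψ α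
      = (E + K) * u α * ψ α := by
  have landscape_eq : schroedingerOperator G t V u α + K * u α = 1 := congrFun hu α
  have eigenvalue_eq : schroedingerOperator G t V ψ α = E * ψ α := congrFun hψ α
  rw [neg_mul_sum_weighted_sub_eq_schroedingerOperator G t V hu_ne]
  linear_combination u α * eigenvalue_eq - ψ α * landscape_eq

end Field

/-- The eigenvalue equation rewritten in landscape form: a weighted graph Laplacian with
edge weights `u α · u β` acting on `ψ/u`, with effective potential `1/u`:
`−t·Σ_{β ~ α} u α · u β · (ψ β / u β − ψ α / u α) + ψ α = E'· u α · ψ α` with `E' = E + K`. -/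
theorem mbll_landscape_schroedinger_form
    {Ω : Type*} [Fintype Ω] [DecidableEq Ω] [Nonempty Ω]
    (G : SimpleGraph Ω) [DecidableRel G.Adj] (hG : G.Connected)
    (t : ℝ) (ht : 0 < t) (V : Ω → ℝ) (K : ℝ)
    (H : Matrix Ω Ω ℝ)
    (hH : ∀ α β, H α β = if α = β then V α else if G.Adj α β then -t else 0)
    (hK : ∀ α, 0 ≤ K + V α - t * (G.degree α + 1))
    (u : Ω → ℝ) (hu : u = (H + K • (1 : Matrix Ω Ω ℝ))⁻¹ *ᵥ (fun _ => 1))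
    (hupos : ∀ α, 0 < u α)
    (ψ : Ω → ℝ) (E : ℝ) (hψ : H *ᵥ ψ = E • ψ)
    (E' : ℝ) (hE' : E' = E + K) :
    ∀ α, -t * ∑ β ∈ G.neighborFinset α, u α * u β * (ψ β / u β - ψ α / u α) + ψ α
      = E' * u α * ψ α := by
  intro α
  have hu_ne : u ≠ 0 := fun h => (hupos α).ne' (congrFun h α)
  rw [mulVec_eq_schroedingerOperator hH] at hψ
  rw [hE']
  exact mbll_landscape_schroedinger_form_general G t V
    (schroedingerOperator_add_smul_eq_of_eq_inv_mulVec hH hu hu_ne) (fun β => (hupos β).ne') hψ α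
end

section
/- Let ψ : Ω → ℝ be an eigenvector of H with eigenvalue E and set E' := E + K. Assume the classically allowed region Ū := {α ∈ Ω : 1/u(α) − E' < 0} is nonempty, and fix ε ∈ (0,1). With the Agmon edge weights w and Agmon action S defined from ε, u, E' as in the context, the following refined inequality holds: Σ_{α∈Ω} ψ(α)²·e^{2S(α)}·(1/u(α) − E') ≤ (1−ε)·Σ_{α∈Ω} ψ(α)²·e^{2S(α)}·max(1/u(α) − E', 0). (Lemma IV.2.) -/
open Matrix Finset

/-!
Write `M = H + K`, `W = 1/u` and `g = exp S`. For symmetric `M`, expanding `(h a - h b)²` gives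
`⟨h v, M (h v)⟩ = ⟨h² v, M v⟩ - ½ ∑ M a b (h a - h b)² v a v b`. With `v = u`, `h = g ψ / u` the
last term has a sign, because `M` is nonpositive off the diagonal, so `∑ W (g ψ)² ≤ ⟨g ψ, M (g ψ)⟩`.
With `v = ψ`, `h = g` the same identity expresses `⟨g ψ, M (g ψ)⟩ - E' ‖g ψ‖²` through the
differences `g a - g b` across edges. These are controlled because `S` is Lipschitz for the Agmon
weights, which are chosen so that
`(g a - g b)² ≤ g a² · 2 (1 - ε) / (t deg a) · max (W a - E') 0`; summing over the `deg a` edges at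
`a` leaves exactly the factor `1 - ε`.
-/

section DirichletForm

variable {ι R : Type*}

lemma neg_apply_mul_sub_sq_nonneg [CommRing R] [LinearOrder R] [IsStrictOrderedRing R]
    {M : Matrix ι ι R} (hoff : ∀ a b, a ≠ b → M a b ≤ 0) (h : ι → R) (a b : ι) :
    0 ≤ -M a b * (h a - h b) ^ 2 := by
  rcases eq_or_ne a b with rfl | hab
  · simp
  · exact mul_nonneg (neg_nonneg.2 (hoff a b hab)) (sq_nonneg _)

variable [Fintype ι]

/-- The Dirichlet form at `h` of the ground state transform of `M` by `v`, that is, of the edge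
conductances `-M a b * v a * v b`. Every unordered pair is counted twice. -/
def dirichletForm [CommRing R] (M : Matrix ι ι R) (v h : ι → R) : R :=
  ∑ a, ∑ b, -M a b * (h a - h b) ^ 2 * (v a * v b)

lemma two_mul_dotProduct_mulVec_mul [CommRing R] {M : Matrix ι ι R} (hM : M.IsSymm)
    (v h : ι → R) :
    2 * ((h * v) ⬝ᵥ M *ᵥ (h * v)) = 2 * ((h ^ 2 * v) ⬝ᵥ M *ᵥ v) + dirichletForm M v h := by
  have expand (x y : ι → R) : x ⬝ᵥ M *ᵥ y = ∑ a, ∑ b, x a * (M a b * y b) := by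
    simp only [dotProduct, mulVec, mul_sum]
  have swap : (h ^ 2 * v) ⬝ᵥ M *ᵥ v = v ⬝ᵥ M *ᵥ (h ^ 2 * v) := by
    rw [dotProduct_mulVec, ← mulVec_transpose, hM.eq, dotProduct_comm]
  rw [two_mul ((h ^ 2 * v) ⬝ᵥ _)]
  nth_rewrite 2 [swap]
  simp only [expand, dirichletForm, mul_sum, ← sum_add_distrib, Pi.mul_apply, Pi.pow_apply]
  refine sum_congr rfl fun a _ => sum_congr rfl fun b _ => ?_
  ring

section OrderedRing

variable [CommRing R] [LinearOrder R] [IsStrictOrderedRing R] {M : Matrix ι ι R}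

lemma dirichletForm_nonneg (hoff : ∀ a b, a ≠ b → M a b ≤ 0) {v : ι → R} (hv : ∀ a, 0 ≤ v a)
    (h : ι → R) :
    0 ≤ dirichletForm M v h :=
  sum_nonneg fun a _ => sum_nonneg fun b _ =>
    mul_nonneg (neg_apply_mul_sub_sq_nonneg hoff h a b) (mul_nonneg (hv a) (hv b))

lemma dirichletForm_le_sum_sq_mul (hM : M.IsSymm) (hoff : ∀ a b, a ≠ b → M a b ≤ 0)
    (v h : ι → R) :
    dirichletForm M v h ≤ ∑ a, v a ^ 2 * ∑ b, -M a b * (h a - h b) ^ 2 := by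
  have swap : ∑ a, ∑ b, v b ^ 2 * (-M a b * (h a - h b) ^ 2) =
      ∑ a, ∑ b, v a ^ 2 * (-M a b * (h a - h b) ^ 2) := by
    rw [sum_comm]
    refine sum_congr rfl fun a _ => sum_congr rfl fun b _ => ?_
    rw [hM.apply, ← neg_sub (h a) (h b), neg_sq]
  have amgm : 2 * dirichletForm M v h ≤
      ∑ a, ∑ b, (v a ^ 2 * (-M a b * (h a - h b) ^ 2) + v b ^ 2 * (-M a b * (h a - h b) ^ 2)) := by
    simp only [dirichletForm, mul_sum]
    refine sum_le_sum fun a _ => sum_le_sum fun b _ => ?_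
    have := mul_le_mul_of_nonneg_left (two_mul_le_add_sq (v a) (v b))
      (neg_apply_mul_sub_sq_nonneg hoff h a b)
    linarith
  simp only [sum_add_distrib] at amgm
  simp only [mul_sum]
  linarith

end OrderedRing

section OrderedField

variable [Field R] [LinearOrder R] [IsStrictOrderedRing R] {M : Matrix ι ι R} {u : ι → R}

lemma sum_sq_mul_mulVec_div_le_dotProduct_mulVec (hM : M.IsSymm)
    (hoff : ∀ a b, a ≠ b → M a b ≤ 0) (hu : ∀ a, 0 < u a) (φ : ι → R) :
    ∑ a, φ a ^ 2 * ((M *ᵥ u) a / u a) ≤ φ ⬝ᵥ M *ᵥ φ := by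
  have hφ : φ / u * u = φ := funext fun a => div_mul_cancel₀ (φ a) (hu a).ne'
  have hdiag : ((φ / u) ^ 2 * u) ⬝ᵥ M *ᵥ u = ∑ a, φ a ^ 2 * ((M *ᵥ u) a / u a) := by
    refine sum_congr rfl fun a _ => ?_
    have := (hu a).ne'
    simp only [Pi.mul_apply, Pi.pow_apply, Pi.div_apply]
    field_simp
  have transform := two_mul_dotProduct_mulVec_mul hM u (φ / u)
  rw [hφ, hdiag] at transform
  linarith [dirichletForm_nonneg hoff (fun a => (hu a).le) (φ / u)]

lemma two_mul_sum_sq_mul_sub_le_dirichletForm (hM : M.IsSymm) (hoff : ∀ a b, a ≠ b → M a b ≤ 0)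
    (hu : ∀ a, 0 < u a) {ψ : ι → R} {E : R} (hψ : M *ᵥ ψ = E • ψ) (g : ι → R) :
    2 * ∑ a, (g a * ψ a) ^ 2 * ((M *ᵥ u) a / u a - E) ≤ dirichletForm M ψ g := by
  have heigen : (g ^ 2 * ψ) ⬝ᵥ M *ᵥ ψ = ∑ a, (g a * ψ a) ^ 2 * E := by
    rw [hψ]
    refine sum_congr rfl fun a _ => ?_
    simp only [Pi.mul_apply, Pi.pow_apply, Pi.smul_apply, smul_eq_mul]
    ring
  have hlower := sum_sq_mul_mulVec_div_le_dotProduct_mulVec hM hoff hu (g * ψ)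
  have transform := two_mul_dotProduct_mulVec_mul hM ψ g
  simp only [Pi.mul_apply] at hlower
  simp only [mul_sub, sum_sub_distrib]
  linarith

end OrderedField

end DirichletForm

section LinearAlgebra

variable {ι R : Type*} [Fintype ι] [DecidableEq ι] [CommRing R] {A : Matrix ι ι R}

lemma mulVec_eq_of_eq_nonsing_inv_mulVec {x b : ι → R} (hx : x = A⁻¹ *ᵥ b) (hx0 : x ≠ 0) :
    A *ᵥ x = b := by
  have hdet : IsUnit A.det := by
    by_contra hdet
    rw [nonsing_inv_apply_not_isUnit _ hdet, zero_mulVec] at hx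
    exact hx0 hx
  rw [hx, mulVec_mulVec, mul_nonsing_inv _ hdet, one_mulVec]

lemma add_smul_one_mulVec_of_mulVec_eq_smul {x : ι → R} {c : R} (hx : A *ᵥ x = c • x) (k : R) :
    (A + k • (1 : Matrix ι ι R)) *ᵥ x = (c + k) • x := by
  rw [add_mulVec, hx, smul_mulVec, one_mulVec, add_smul]

end LinearAlgebra

/-- A symmetric matrix with an arbitrary diagonal whose off-diagonal entries live on the edges of
`G` and are `-s` for edge-dependent hopping amplitudes `s ∈ [0, t]`. -/
structure IsHoppingMatrix {ι : Type*} (G : SimpleGraph ι) (t : ℝ) (M : Matrix ι ι ℝ) : Prop where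
  isSymm : M.IsSymm
  apply_eq_zero : ∀ a b, a ≠ b → ¬ G.Adj a b → M a b = 0
  apply_nonpos : ∀ a b, G.Adj a b → M a b ≤ 0
  neg_le_apply : ∀ a b, G.Adj a b → -t ≤ M a b

namespace IsHoppingMatrix

variable {ι : Type*} {G : SimpleGraph ι} {t : ℝ} {M : Matrix ι ι ℝ}

lemma of_apply_eq [DecidableEq ι] [DecidableRel G.Adj] (ht : 0 ≤ t) {V : ι → ℝ}
    (hM : ∀ a b, M a b = if a = b then V a else if G.Adj a b then -t else 0) :
    IsHoppingMatrix G t M where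
  isSymm := IsSymm.ext fun a b => by
    rcases eq_or_ne a b with rfl | hab
    · rfl
    · simp [hM, hab, hab.symm, G.adj_comm]
  apply_eq_zero a b hab hadj := by simp [hM, hab, hadj]
  apply_nonpos a b hadj := by simp [hM, hadj.ne, hadj, ht]
  neg_le_apply a b hadj := by simp [hM, hadj.ne, hadj]

lemma add_smul_one [DecidableEq ι] (hM : IsHoppingMatrix G t M) (k : ℝ) :
    IsHoppingMatrix G t (M + k • (1 : Matrix ι ι ℝ)) where
  isSymm := hM.isSymm.add (isSymm_one.smul k)
  apply_eq_zero a b hab hadj := by simp [hab, hM.apply_eq_zero a b hab hadj]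
  apply_nonpos a b hadj := by simpa [hadj.ne] using hM.apply_nonpos a b hadj
  neg_le_apply a b hadj := by simpa [hadj.ne] using hM.neg_le_apply a b hadj

lemma apply_nonpos_of_ne (hM : IsHoppingMatrix G t M) (a b : ι) (hab : a ≠ b) : M a b ≤ 0 := by
  by_cases hadj : G.Adj a b
  · exact hM.apply_nonpos a b hadj
  · exact (hM.apply_eq_zero a b hab hadj).le

variable [Fintype ι] [DecidableRel G.Adj]

lemma sum_neg_apply_mul_sub_sq_le (hM : IsHoppingMatrix G t M) {h : ι → ℝ} {a : ι} {C : ℝ}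
    (hC : ∀ b, G.Adj a b → (h a - h b) ^ 2 ≤ C) :
    ∑ b, -M a b * (h a - h b) ^ 2 ≤ t * G.degree a * C := by
  have hvanish : ∀ b, b ∉ G.neighborFinset a → -M a b * (h a - h b) ^ 2 = 0 := by
    intro b hb
    rcases eq_or_ne a b with rfl | hab
    · simp
    · simp [hM.apply_eq_zero a b hab (by simpa using hb)]
  have hedge : ∀ b ∈ G.neighborFinset a, -M a b * (h a - h b) ^ 2 ≤ t * C := by
    intro b hb
    have hadj : G.Adj a b := by simpa using hb
    have hnonneg := neg_nonneg.2 (hM.apply_nonpos a b hadj)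
    have hle := neg_le.1 (hM.neg_le_apply a b hadj)
    exact mul_le_mul hle (hC b hadj) (sq_nonneg _) (hnonneg.trans hle)
  calc ∑ b, -M a b * (h a - h b) ^ 2
      = ∑ b ∈ G.neighborFinset a, -M a b * (h a - h b) ^ 2 :=
        (sum_subset (subset_univ _) fun b _ hb => hvanish b hb).symm
    _ ≤ #(G.neighborFinset a) • (t * C) := sum_le_card_nsmul _ _ _ hedge
    _ = t * G.degree a * C := by
        rw [G.card_neighborFinset_eq_degree, nsmul_eq_mul]
        ring

lemma dirichletForm_le (hM : IsHoppingMatrix G t M) (v : ι → ℝ) {g c : ι → ℝ}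
    (hg : ∀ a b, G.Adj a b → (g a - g b) ^ 2 ≤ g a ^ 2 * c a) :
    dirichletForm M v g ≤ ∑ a, (g a * v a) ^ 2 * (t * G.degree a * c a) :=
  calc dirichletForm M v g
      ≤ ∑ a, v a ^ 2 * ∑ b, -M a b * (g a - g b) ^ 2 :=
        dirichletForm_le_sum_sq_mul hM.isSymm hM.apply_nonpos_of_ne v g
    _ ≤ ∑ a, v a ^ 2 * (t * G.degree a * (g a ^ 2 * c a)) := by
        gcongr with a
        exact hM.sum_neg_apply_mul_sub_sq_le (hg a)
    _ = ∑ a, (g a * v a) ^ 2 * (t * G.degree a * c a) :=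
        sum_congr rfl fun a _ => by ring

lemma sum_sq_mul_sub_le (hM : IsHoppingMatrix G t M) {u ψ g F : ι → ℝ} {E κ : ℝ}
    (hu : ∀ a, 0 < u a) (hψ : M *ᵥ ψ = E • ψ) (hF : ∀ a, 0 ≤ 2 * κ * F a)
    (hg : ∀ a b, G.Adj a b → (g a - g b) ^ 2 ≤ g a ^ 2 * (2 * κ / (t * G.degree a) * F a)) :
    ∑ a, (g a * ψ a) ^ 2 * ((M *ᵥ u) a / u a - E) ≤ κ * ∑ a, (g a * ψ a) ^ 2 * F a := by
  have hdegree (a : ι) : t * G.degree a * (2 * κ / (t * G.degree a) * F a) ≤ 2 * κ * F a := by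
    rw [div_mul_eq_mul_div, mul_div_left_comm]
    exact mul_le_of_le_one_right (hF a) (div_self_le_one _)
  refine le_of_mul_le_mul_left ?_ (two_pos (α := ℝ))
  calc 2 * ∑ a, (g a * ψ a) ^ 2 * ((M *ᵥ u) a / u a - E)
      ≤ dirichletForm M ψ g :=
        two_mul_sum_sq_mul_sub_le_dirichletForm hM.isSymm hM.apply_nonpos_of_ne hu hψ g
    _ ≤ ∑ a, (g a * ψ a) ^ 2 * (t * G.degree a * (2 * κ / (t * G.degree a) * F a)) :=
        hM.dirichletForm_le ψ hg
    _ ≤ ∑ a, (g a * ψ a) ^ 2 * (2 * κ * F a) :=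
        sum_le_sum fun a _ => mul_le_mul_of_nonneg_left (hdegree a) (sq_nonneg _)
    _ = 2 * (κ * ∑ a, (g a * ψ a) ^ 2 * F a) := by
        simp only [mul_sum]
        exact sum_congr rfl fun a _ => by ring

end IsHoppingMatrix

section AgmonAction

variable {V : Type*} {G : SimpleGraph V}

/-- The Agmon edge weight with rate function `c`. If `S` varies by at most this weight across the
edge, then `exp S` varies by a factor of at most `1 + √(c a)` and at most `1 + √(c b)`. -/
noncomputable def agmonWeight (c : V → ℝ) (a b : V) : ℝ :=
  min (Real.log (1 + √(c a))) (Real.log (1 + √(c b)))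

lemma agmonWeight_nonneg (c : V → ℝ) (a b : V) : 0 ≤ agmonWeight c a b :=
  have hlog (x : ℝ) : 0 ≤ Real.log (1 + √x) :=
    Real.log_nonneg (le_add_of_nonneg_right x.sqrt_nonneg)
  le_min (hlog _) (hlog _)

lemma agmonWeight_comm (c : V → ℝ) (a b : V) : agmonWeight c a b = agmonWeight c b a :=
  min_comm _ _

/-- The Agmon action: the distance from the set `U` in the graph `G` with edge weights `w`. It has
the junk value `0` at vertices that no walk from `U` reaches. -/
noncomputable def agmonAction (G : SimpleGraph V) (w : V → V → ℝ) (U : Set V) (a : V) : ℝ :=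
  sInf {s : ℝ | ∃ x ∈ U, ∃ p : G.Walk x a, s = (p.darts.map fun d => w d.toProd.1 d.toProd.2).sum}

lemma agmonAction_le_add {w : V → V → ℝ} (hw : ∀ a b, 0 ≤ w a b) {U : Set V} {a b : V}
    (ha : ∃ x ∈ U, G.Reachable x a) (hab : G.Adj a b) :
    agmonAction G w U b ≤ agmonAction G w U a + w a b := by
  rw [← sub_le_iff_le_add]
  obtain ⟨x, hx, ⟨p⟩⟩ := ha
  refine le_csInf ⟨_, x, hx, p, rfl⟩ ?_
  rintro _ ⟨y, hy, q, rfl⟩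
  rw [sub_le_iff_le_add]
  refine csInf_le ⟨0, ?_⟩ ⟨y, hy, q.concat hab, by simp [SimpleGraph.Walk.darts_concat]⟩
  rintro _ ⟨z, -, r, rfl⟩
  exact List.sum_nonneg (List.forall_mem_map.2 fun d _ => hw _ _)

lemma abs_agmonAction_sub_le {w : V → V → ℝ} (hw : ∀ a b, 0 ≤ w a b)
    (hwcomm : ∀ a b, w a b = w b a) {U : Set V} (hU : ∀ a, ∃ x ∈ U, G.Reachable x a) {a b : V}
    (hab : G.Adj a b) : |agmonAction G w U b - agmonAction G w U a| ≤ w a b := by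
  have hle := agmonAction_le_add hw (hU a) hab
  have hge := agmonAction_le_add hw (hU b) hab.symm
  rw [hwcomm b a] at hge
  exact abs_sub_le_iff.2 ⟨by linarith, by linarith⟩

lemma abs_exp_sub_one_le_of_abs_le_log {x s : ℝ} (hs : 0 ≤ s) (hx : |x| ≤ Real.log (1 + s)) :
    |Real.exp x - 1| ≤ s := by
  have hpos : 0 < 1 + s := by linarith
  have hexp_le : Real.exp x ≤ 1 + s :=
    (Real.le_log_iff_exp_le hpos).1 ((le_abs_self x).trans hx)
  have hexp_neg_le : Real.exp (-x) ≤ 1 + s :=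
    (Real.le_log_iff_exp_le hpos).1 ((neg_le_abs x).trans hx)
  have hinv : Real.exp x * Real.exp (-x) = 1 := by
    rw [← Real.exp_add, add_neg_cancel, Real.exp_zero]
  have hle_mul : 1 ≤ Real.exp x * (1 + s) :=
    hinv.symm.le.trans (mul_le_mul_of_nonneg_left hexp_neg_le (Real.exp_pos x).le)
  exact abs_sub_le_iff.2 ⟨by linarith, by nlinarith⟩

lemma exp_sub_exp_sq_le {x y s : ℝ} (hs : 0 ≤ s) (hxy : |y - x| ≤ Real.log (1 + s)) :
    (Real.exp x - Real.exp y) ^ 2 ≤ Real.exp x ^ 2 * s ^ 2 := by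
  have hfactor : Real.exp y = Real.exp x * Real.exp (y - x) := by
    rw [← Real.exp_add, add_sub_cancel]
  calc (Real.exp x - Real.exp y) ^ 2
      = Real.exp x ^ 2 * |Real.exp (y - x) - 1| ^ 2 := by
        rw [hfactor, sq_abs]
        ring
    _ ≤ Real.exp x ^ 2 * s ^ 2 := by
        gcongr
        exact abs_exp_sub_one_le_of_abs_le_log hs hxy

lemma exp_agmonAction_sub_sq_le {c : V → ℝ} {U : Set V} (hU : ∀ a, ∃ x ∈ U, G.Reachable x a)
    {a b : V} (hc : 0 ≤ c a) (hab : G.Adj a b) :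
    (Real.exp (agmonAction G (agmonWeight c) U a) -
        Real.exp (agmonAction G (agmonWeight c) U b)) ^ 2 ≤
      Real.exp (agmonAction G (agmonWeight c) U a) ^ 2 * c a := by
  have hlip := abs_agmonAction_sub_le (agmonWeight_nonneg c) (agmonWeight_comm c) hU hab
  simpa only [Real.sq_sqrt hc] using
    exp_sub_exp_sq_le (Real.sqrt_nonneg _) (hlip.trans (min_le_left _ _))

end AgmonAction

theorem mbll_agmon_refined_inequality_general
    {Ω : Type*} [Fintype Ω] {G : SimpleGraph Ω} [DecidableRel G.Adj]
    {t : ℝ} (ht : 0 < t) {M : Matrix Ω Ω ℝ} (hM : IsHoppingMatrix G t M)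
    {u : Ω → ℝ} (hu : M *ᵥ u = fun _ => 1) (hupos : ∀ α, 0 < u α)
    {ψ : Ω → ℝ} {E' : ℝ} (hψ : M *ᵥ ψ = E' • ψ)
    {U : Set Ω} (hU : ∀ α, ∃ x ∈ U, G.Reachable x α)
    {ε : ℝ} (hε : ε ≤ 1) {w : Ω → Ω → ℝ}
    (hw : ∀ α β, w α β =
      agmonWeight (fun κ => 2 * (1 - ε) / (t * G.degree κ) * max (1 / u κ - E') 0) α β)
    {S : Ω → ℝ} (hS : ∀ α, S α = agmonAction G w U α) :
    ∑ α, ψ α ^ 2 * Real.exp (2 * S α) * (1 / u α - E')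
      ≤ (1 - ε) * ∑ α, ψ α ^ 2 * Real.exp (2 * S α) * max (1 / u α - E') 0 := by
  obtain rfl := funext₂ hw
  obtain rfl := funext hS
  have hF (α : Ω) : 0 ≤ 2 * (1 - ε) * max (1 / u α - E') 0 :=
    mul_nonneg (by linarith) (le_max_right _ _)
  have hc (α : Ω) : 0 ≤ 2 * (1 - ε) / (t * G.degree α) * max (1 / u α - E') 0 := by
    rw [div_mul_eq_mul_div]
    exact div_nonneg (hF α) (by positivity)
  have hweight (s x : ℝ) : x ^ 2 * Real.exp (2 * s) = (Real.exp s * x) ^ 2 := by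
    rw [mul_pow, ← Real.exp_nat_mul, mul_comm, Nat.cast_ofNat]
  simpa only [hweight, hu] using hM.sum_sq_mul_sub_le hupos hψ hF fun α _ hαβ =>
    exp_agmonAction_sub_sq_le hU (hc α) hαβ

/-- **Lemma IV.2**: with the Agmon edge weights `w` and Agmon action `S` built from
`ε ∈ (0,1)`, the landscape `u` and the shifted energy `E' = E + K`, every eigenstate
satisfies the refined inequality
`Σ_α ψ α² e^{2S α} (1/u α − E') ≤ (1−ε)·Σ_α ψ α² e^{2S α} max(1/u α − E', 0)`. -/
theorem mbll_agmon_refined_inequality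
    {Ω : Type*} [Fintype Ω] [DecidableEq Ω] [Nonempty Ω]
    (G : SimpleGraph Ω) [DecidableRel G.Adj] (hG : G.Connected)
    (t : ℝ) (ht : 0 < t) (V : Ω → ℝ) (K : ℝ)
    (H : Matrix Ω Ω ℝ)
    (hH : ∀ α β, H α β = if α = β then V α else if G.Adj α β then -t else 0)
    (hK : ∀ α, 0 ≤ K + V α - t * (G.degree α + 1))
    (u : Ω → ℝ) (hu : u = (H + K • (1 : Matrix Ω Ω ℝ))⁻¹ *ᵥ (fun _ => 1))
    (hupos : ∀ α, 0 < u α)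
    (ψ : Ω → ℝ) (E : ℝ) (hψ : H *ᵥ ψ = E • ψ)
    (E' : ℝ) (hE' : E' = E + K)
    (Ubar : Finset Ω) (hUbar : ∀ α, α ∈ Ubar ↔ 1 / u α - E' < 0) (hUne : Ubar.Nonempty)
    (ε : ℝ) (hε0 : 0 < ε) (hε1 : ε < 1)
    (w : Ω → Ω → ℝ)
    (hw : ∀ α β, w α β =
      min (Real.log (1 + Real.sqrt (2 * (1 - ε) / (t * G.degree α) * max (1 / u α - E') 0)))
          (Real.log (1 + Real.sqrt (2 * (1 - ε) / (t * G.degree β) * max (1 / u β - E') 0))))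
    (S : Ω → ℝ)
    (hS : ∀ α, S α = sInf {s : ℝ | ∃ x ∈ Ubar, ∃ p : G.Walk x α,
      s = (p.darts.map fun d => w d.toProd.1 d.toProd.2).sum}) :
    ∑ α, ψ α ^ 2 * Real.exp (2 * S α) * (1 / u α - E')
      ≤ (1 - ε) * ∑ α, ψ α ^ 2 * Real.exp (2 * S α) * max (1 / u α - E') 0 := by
  have hu0 : u ≠ 0 := Function.ne_iff.2 ⟨Classical.arbitrary Ω, (hupos _).ne'⟩
  exact mbll_agmon_refined_inequality_general ht
    ((IsHoppingMatrix.of_apply_eq ht.le hH).add_smul_one K)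
    (mulVec_eq_of_eq_nonsing_inv_mulVec hu hu0) hupos
    (hE' ▸ add_smul_one_mulVec_of_mulVec_eq_smul hψ K) (U := Ubar)
    (fun α => hUne.imp fun x hx => ⟨hx, hG x α⟩) hε1.le hw hS
end

section
/- For all functions ζ, η, φ : Ω → ℝ, the following exact identity holds: Σ_{α∈Ω} ζ(α)·(H(η·φ))(α) − Σ_{α∈Ω} ζ(α)·η(α)·(Hφ)(α) = t·Σ_{{α,β} edge of G} (η(β) − η(α))·(φ(α)·ζ(β) − φ(β)·ζ(α)), where η·φ denotes the entrywise product and the edge sum counts each unordered edge once. (The boundary/commutator identity underlying the proofs of Locality Theorems I and II: cutting off a function by η produces a residual supported only on edges across which η changes.) -/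
open Matrix Finset

/-!
In the commutator of a matrix `A` with multiplication by `η`, the entry `A α β` is multiplied by
`η β - η α`. The diagonal therefore drops out, and the form is a sum over ordered pairs of adjacent
sites. The two orientations of an edge carry opposite factors `η β - η α`, and adding them gives the
antisymmetric current of `φ` and `ζ` through that edge.
-/

section GraphSums

variable {Ω M : Type*} [Fintype Ω] [AddCommMonoid M] (G : SimpleGraph Ω) [DecidableRel G.Adj]

theorem sum_sum_eq_sum_dart {f : Ω → Ω → M} (hf : ∀ α β, ¬G.Adj α β → f α β = 0) :
    ∑ α, ∑ β, f α β = ∑ d : G.Dart, f d.fst d.snd := by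
  rw [← Fintype.sum_prod_type']
  have vanish_off_darts (p : Ω × Ω) (hp : p ∉ Set.range (SimpleGraph.Dart.toProd (G := G))) :
      f p.1 p.2 = 0 :=
    hf _ _ fun hadj => hp ⟨⟨p, hadj⟩, rfl⟩
  exact (Fintype.sum_of_injective _ SimpleGraph.Dart.toProd_injective _ _ vanish_off_darts
    fun _ => rfl).symm

theorem sum_dart_eq_sum_edgeFinset (f : Ω → Ω → M) :
    ∑ d : G.Dart, f d.fst d.snd =
      ∑ e ∈ G.edgeFinset, Sym2.lift ⟨fun α β => f α β + f β α, fun _ _ => add_comm _ _⟩ e := by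
  classical
  have edge_mem (d : G.Dart) : d.edge ∈ G.edgeFinset := G.mem_edgeFinset.2 d.edge_mem
  rw [← sum_fiberwise_of_maps_to fun d _ => edge_mem d]
  refine sum_congr rfl fun e he => ?_
  induction e with
  | _ α β =>
    let d : G.Dart := ⟨(α, β), G.mem_edgeFinset.1 he⟩
    calc ∑ d' : G.Dart with d'.edge = d.edge, f d'.fst d'.snd
        = ∑ d' ∈ {d, d.symm}, f d'.fst d'.snd := by rw [d.edge_fiber]
      _ = f α β + f β α := sum_pair d.symm_ne.symm

end GraphSums

section Commutator

variable {Ω R : Type*} [Fintype Ω] [CommRing R]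

theorem dotProduct_mulVec_mul_sub (A : Matrix Ω Ω R) (ζ η φ : Ω → R) :
    ζ ⬝ᵥ A *ᵥ (η * φ) - (ζ * η) ⬝ᵥ A *ᵥ φ =
      ∑ α, ∑ β, (η β - η α) * (A α β * ζ α * φ β) := by
  simp only [mulVec, dotProduct, Pi.mul_apply, mul_sum, ← sum_sub_distrib]
  exact sum_congr rfl fun α _ => sum_congr rfl fun β _ => by ring

variable (G : SimpleGraph Ω) [DecidableRel G.Adj]

theorem dotProduct_mulVec_mul_sub_eq_sum_edgeFinset {A : Matrix Ω Ω R}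
    (hA : ∀ α β, α ≠ β → ¬G.Adj α β → A α β = 0) (ζ η φ : Ω → R) :
    ζ ⬝ᵥ A *ᵥ (η * φ) - (ζ * η) ⬝ᵥ A *ᵥ φ =
      ∑ e ∈ G.edgeFinset,
        Sym2.lift ⟨fun α β => (η β - η α) * (A α β * ζ α * φ β - A β α * ζ β * φ α),
          fun α β => by ring⟩ e := by
  have vanish_off_edges (α β : Ω) (hadj : ¬G.Adj α β) :
      (η β - η α) * (A α β * ζ α * φ β) = 0 := by
    obtain rfl | hne := eq_or_ne α β
    · simp
    · simp [hA α β hne hadj]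
  rw [dotProduct_mulVec_mul_sub, sum_sum_eq_sum_dart G vanish_off_edges,
    sum_dart_eq_sum_edgeFinset G fun α β => (η β - η α) * (A α β * ζ α * φ β)]
  refine sum_congr rfl fun e _ => ?_
  induction e with
  | _ α β =>
    simp only [Sym2.lift_mk]
    ring

theorem mbll_cutoff_commutator_identity_general {t : R} {H : Matrix Ω Ω R}
    (hH : ∀ α β, α ≠ β → H α β = if G.Adj α β then -t else 0) (ζ η φ : Ω → R) :
    ∑ α, ζ α * (H *ᵥ fun β => η β * φ β) α - ∑ α, ζ α * η α * (H *ᵥ φ) α =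
      t * ∑ e ∈ G.edgeFinset,
        Sym2.lift ⟨fun α β => (η β - η α) * (φ α * ζ β - φ β * ζ α), fun α β => by ring⟩ e := by
  have hopping {α β : Ω} (hadj : G.Adj α β) : H α β = -t := by simp [hH α β hadj.ne, hadj]
  have no_hopping (α β : Ω) (hne : α ≠ β) (hadj : ¬G.Adj α β) : H α β = 0 := by
    simp [hH α β hne, hadj]
  rw [mul_sum]
  refine (dotProduct_mulVec_mul_sub_eq_sum_edgeFinset G no_hopping ζ η φ).trans
    (sum_congr rfl fun e he => ?_)
  induction e with
  | _ α β =>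
    have hadj : G.Adj α β := G.mem_edgeFinset.1 he
    simp only [Sym2.lift_mk, hopping hadj, hopping hadj.symm]
    ring

end Commutator

/-- The boundary/commutator identity underlying the Locality Theorems: for all
`ζ, η, φ : Ω → ℝ`,
`Σ_α ζ α · (H(η·φ)) α − Σ_α ζ α · η α · (Hφ) α
  = t · Σ_{edges {α,β}} (η β − η α)(φ α ζ β − φ β ζ α)`,
the edge sum counting each unordered edge of `G` once. -/
theorem mbll_cutoff_commutator_identity
    {Ω : Type*} [Fintype Ω] [DecidableEq Ω] [Nonempty Ω]
    (G : SimpleGraph Ω) [DecidableRel G.Adj]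
    (t : ℝ) (ht : 0 < t) (V : Ω → ℝ)
    (H : Matrix Ω Ω ℝ)
    (hH : ∀ α β, H α β = if α = β then V α else if G.Adj α β then -t else 0) :
    ∀ ζ η φ : Ω → ℝ,
      ∑ α, ζ α * (H *ᵥ fun β => η β * φ β) α - ∑ α, ζ α * η α * (H *ᵥ φ) α
        = t * ∑ e ∈ G.edgeFinset,
            Sym2.lift ⟨fun α β => (η β - η α) * (φ α * ζ β - φ β * ζ α),
              fun α β => by ring⟩ e :=
  mbll_cutoff_commutator_identity_general G fun α β hne => by rw [hH, if_neg hne]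
end

section
/- Let Ω be a finite nonempty set, let D be the diagonal real Ω×Ω matrix with diagonal entries 𝔈(α) satisfying 𝔈(α) ≥ δ₀ for some δ₀ > 0, and let A be a real Ω×Ω matrix whose rows satisfy Σ_{β∈Ω} |A(α,β)| ≤ q·δ₀ for every α, for some 0 ≤ q < 1. Then: (i) for every n ≥ 0 and every α, |(D⁻¹·(A·D⁻¹)ⁿ·𝟙)(α)| ≤ qⁿ/𝔈(α), so the locator series for the landscape is dominated by a geometric series; (ii) D + A is invertible and Σ_{n=0}^{∞} (−1)ⁿ·D⁻¹·(A·D⁻¹)ⁿ·𝟙 = (D + A)⁻¹·𝟙. (Theorem V.1: the locator expansion for the many-body localization landscape u = (U + T + V)⁻¹𝟙 converges for sufficiently small hopping and interaction; in the Fock-space setting D has entries 𝔈(α) = Σᵢ εᵢ·nᵢ^{(α)} ≥ δN and the row-sum hypothesis holds because every node of the Fock-space graph of a d-dimensional cubic lattice has degree O(N), and crucially no energy denominators E − 𝔈(α) — and hence no resonances — appear.) -/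
open Matrix Finset

/-!
Factor `D + A = (1 + A D⁻¹) D`. In the operator norm induced by the sup norm, i.e. the largest
`ℓ¹`-norm of a row, the hypothesis on `A` gives `‖A D⁻¹‖ ≤ q < 1`. Hence `1 + A D⁻¹` is invertible
by its Neumann series, and multiplying that series by `D⁻¹` on the left gives the locator series.
-/

section NeumannSeries

open scoped Ring

lemma one_sub_neg_mul_inverse_mul {R : Type*} [Ring R] {d : R} (hd : IsUnit d) (a : R) :
    (1 - -(a * d⁻¹ʳ)) * d = d + a := by
  rw [sub_neg_eq_add, add_mul, one_mul, Ring.inverse_mul_cancel_right _ _ hd]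

variable {R : Type*} [NormedRing R] [HasSummableGeomSeries R] {d a : R}

lemma isUnit_add_of_norm_mul_inverse_lt_one (hd : IsUnit d) (ha : ‖a * d⁻¹ʳ‖ < 1) :
    IsUnit (d + a) := by
  rw [← norm_neg] at ha
  rw [← one_sub_neg_mul_inverse_mul hd]
  exact (isUnit_one_sub_of_norm_lt_one ha).mul hd

lemma hasSum_inverse_add_of_norm_mul_inverse_lt_one (hd : IsUnit d) (ha : ‖a * d⁻¹ʳ‖ < 1) :
    HasSum (fun n : ℕ ↦ d⁻¹ʳ * (-(a * d⁻¹ʳ)) ^ n) (d + a)⁻¹ʳ := by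
  rw [← norm_neg] at ha
  rw [← one_sub_neg_mul_inverse_mul hd, Ring.inverse_mul (.inr hd)]
  exact (hasSum_geom_series_inverse _ ha).mul_left _

end NeumannSeries

lemma hasSum_mulVec {ι m n R : Type*} [Fintype n] [NonUnitalNonAssocSemiring R]
    [TopologicalSpace R] [ContinuousAdd R] [ContinuousMul R] {f : ι → Matrix m n R}
    {M : Matrix m n R} (hf : HasSum f M) (v : n → R) : HasSum (fun i ↦ f i *ᵥ v) (M *ᵥ v) :=
  hf.map (mulVec.addMonoidHomLeft v) (continuous_id.matrix_mulVec continuous_const)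

lemma inv_diagonal_of_forall_ne_zero {n K : Type*} [Fintype n] [DecidableEq n] [Field K]
    {d : n → K} (hd : ∀ i, d i ≠ 0) : (diagonal d)⁻¹ = diagonal d⁻¹ :=
  inv_eq_right_inv <| by
    rw [diagonal_mul_diagonal, diagonal_eq_one]
    exact funext fun i ↦ mul_inv_cancel₀ (hd i)

section RowSumNorm

open scoped Matrix.Norms.Operator

lemma linfty_opNorm_le {m n E : Type*} [Fintype m] [Fintype n] [SeminormedAddCommGroup E]
    {M : Matrix m n E} {r : ℝ} (hr : 0 ≤ r) (hM : ∀ i, ∑ j, ‖M i j‖ ≤ r) : ‖M‖ ≤ r := by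
  lift r to NNReal using hr
  rw [linfty_opNorm_def, NNReal.coe_le_coe, Finset.sup_le_iff]
  exact fun i _ ↦ by simpa only [← NNReal.coe_le_coe, NNReal.coe_sum, coe_nnnorm] using hM i

variable {Ω R : Type*} [Fintype Ω] [DecidableEq Ω]

lemma norm_pow_mulVec_le [SeminormedRing R] (M : Matrix Ω Ω R) (n : ℕ) (v : Ω → R) :
    ‖M ^ n *ᵥ v‖ ≤ ‖M‖ ^ n * ‖v‖ := by
  induction n with
  | zero => simp
  | succ n ih =>
    calc ‖M ^ (n + 1) *ᵥ v‖ = ‖M *ᵥ (M ^ n *ᵥ v)‖ := by rw [mulVec_mulVec, pow_succ']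
      _ ≤ ‖M‖ * ‖M ^ n *ᵥ v‖ := linfty_opNorm_mulVec _ _
      _ ≤ ‖M‖ * (‖M‖ ^ n * ‖v‖) := by gcongr
      _ = ‖M‖ ^ (n + 1) * ‖v‖ := by rw [pow_succ', mul_assoc]

lemma hasSummableGeomSeries_matrix [NormedRing R] [CompleteSpace R] :
    HasSummableGeomSeries (Matrix Ω Ω R) :=
  -- Instance search prefers the product uniformity on matrices, which agrees with that of the norm
  -- only after unfolding.
  have : @CompleteSpace (Matrix Ω Ω R) PseudoMetricSpace.toUniformSpace :=
    inferInstanceAs (CompleteSpace (Ω → Ω → R))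
  inferInstance

section Inverse

variable [NormedCommRing R] [CompleteSpace R] {D A : Matrix Ω Ω R}

attribute [local instance] hasSummableGeomSeries_matrix

lemma isUnit_add_of_norm_mul_inv_lt_one (hD : IsUnit D) (hA : ‖A * D⁻¹‖ < 1) :
    IsUnit (D + A) := by
  rw [nonsing_inv_eq_ringInverse] at hA
  exact isUnit_add_of_norm_mul_inverse_lt_one hD hA

lemma hasSum_inv_add_of_norm_mul_inv_lt_one (hD : IsUnit D) (hA : ‖A * D⁻¹‖ < 1) :
    HasSum (fun n : ℕ ↦ (-1 : R) ^ n • (D⁻¹ * (A * D⁻¹) ^ n)) (D + A)⁻¹ := by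
  simp only [nonsing_inv_eq_ringInverse] at hA ⊢
  convert! hasSum_inverse_add_of_norm_mul_inverse_lt_one hD hA using 2 with n
  rw [← neg_one_smul R (A * _), smul_pow, mul_smul_comm]

end Inverse

section Diagonal

variable {𝕜 : Type*} [NormedField 𝕜] {𝔈 : Ω → 𝕜}

lemma norm_inv_diagonal_mulVec_apply (h𝔈 : ∀ α, 𝔈 α ≠ 0) (w : Ω → 𝕜) (α : Ω) :
    ‖((diagonal 𝔈)⁻¹ *ᵥ w) α‖ = ‖w α‖ / ‖𝔈 α‖ := by
  rw [inv_diagonal_of_forall_ne_zero h𝔈, mulVec_diagonal, Pi.inv_apply, norm_mul, norm_inv,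
    div_eq_inv_mul]

lemma norm_mul_inv_diagonal_le {A : Matrix Ω Ω 𝕜} {q : ℝ} (h𝔈 : ∀ α, 𝔈 α ≠ 0) (hq : 0 ≤ q)
    (hA : ∀ α, ∑ β, ‖A α β‖ / ‖𝔈 β‖ ≤ q) : ‖A * (diagonal 𝔈)⁻¹‖ ≤ q := by
  refine linfty_opNorm_le hq fun α ↦ ?_
  simpa only [inv_diagonal_of_forall_ne_zero h𝔈, mul_diagonal, Pi.inv_apply, ← div_eq_mul_inv,
    norm_div] using hA α

end Diagonal

end RowSumNorm

lemma sum_div_le_of_sum_le_mul {ι K : Type*} [Field K] [LinearOrder K] [IsStrictOrderedRing K]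
    {s : Finset ι} {a e : ι → K} {δ q : K} (hδ : 0 < δ) (he : ∀ i ∈ s, δ ≤ e i)
    (ha₀ : ∀ i ∈ s, 0 ≤ a i) (ha : ∑ i ∈ s, a i ≤ q * δ) :
    ∑ i ∈ s, a i / e i ≤ q :=
  calc ∑ i ∈ s, a i / e i ≤ ∑ i ∈ s, a i / δ :=
        sum_le_sum fun i hi ↦ div_le_div_of_nonneg_left (ha₀ i hi) hδ (he i hi)
    _ = (∑ i ∈ s, a i) / δ := (sum_div ..).symm
    _ ≤ q := (div_le_iff₀ hδ).2 ha

open scoped Matrix.Norms.Operator in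
theorem mbll_locator_expansion_converges_general {Ω 𝕜 : Type*} [Fintype Ω] [DecidableEq Ω]
    [NormedField 𝕜] [CompleteSpace 𝕜] {𝔈 : Ω → 𝕜} (h𝔈 : ∀ α, 𝔈 α ≠ 0)
    {A : Matrix Ω Ω 𝕜} {q : ℝ} (hq0 : 0 ≤ q) (hq1 : q < 1)
    (hA : ∀ α, ∑ β, ‖A α β‖ / ‖𝔈 β‖ ≤ q)
    {D : Matrix Ω Ω 𝕜} (hD : D = diagonal 𝔈) (v : Ω → 𝕜) :
    (∀ (n : ℕ) (α : Ω), ‖((D⁻¹ * (A * D⁻¹) ^ n) *ᵥ v) α‖ ≤ q ^ n * ‖v‖ / ‖𝔈 α‖) ∧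
    IsUnit (D + A) ∧
    HasSum (fun n : ℕ ↦ (-1 : 𝕜) ^ n • ((D⁻¹ * (A * D⁻¹) ^ n) *ᵥ v)) ((D + A)⁻¹ *ᵥ v) := by
  subst hD
  have isUnit_D : IsUnit (diagonal 𝔈) :=
    isUnit_diagonal.2 <| Pi.isUnit_iff.2 fun α ↦ (h𝔈 α).isUnit
  have norm_le : ‖A * (diagonal 𝔈)⁻¹‖ ≤ q := norm_mul_inv_diagonal_le h𝔈 hq0 hA
  have norm_lt_one : ‖A * (diagonal 𝔈)⁻¹‖ < 1 := norm_le.trans_lt hq1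
  refine ⟨fun n α ↦ ?_, isUnit_add_of_norm_mul_inv_lt_one isUnit_D norm_lt_one, ?_⟩
  · rw [← mulVec_mulVec, norm_inv_diagonal_mulVec_apply h𝔈]
    gcongr
    calc ‖((A * (diagonal 𝔈)⁻¹) ^ n *ᵥ v) α‖
      _ ≤ ‖(A * (diagonal 𝔈)⁻¹) ^ n *ᵥ v‖ := norm_le_pi_norm _ α
      _ ≤ ‖A * (diagonal 𝔈)⁻¹‖ ^ n * ‖v‖ := norm_pow_mulVec_le _ n v
      _ ≤ q ^ n * ‖v‖ := by gcongr
  · have hasSum_inv := hasSum_inv_add_of_norm_mul_inv_lt_one isUnit_D norm_lt_one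
    simpa only [smul_mulVec] using hasSum_mulVec hasSum_inv v

/-- **Theorem V.1 (convergent locator expansion for the landscape)**: if the diagonal
matrix `D = diag 𝔈` has entries `𝔈 α ≥ δ₀ > 0` and the perturbation `A` has row sums
`Σ_β |A α β| ≤ q·δ₀` with `0 ≤ q < 1`, then (i) the `n`-th locator term is dominated by
a geometric series, `|(D⁻¹ (A D⁻¹)ⁿ 𝟙) α| ≤ qⁿ/𝔈 α`; and (ii) `D + A` is invertible and
the alternating locator series sums to the landscape, `Σₙ (−1)ⁿ D⁻¹ (A D⁻¹)ⁿ 𝟙 = (D+A)⁻¹ 𝟙`.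
Crucially no energy denominators `E − 𝔈 α` (hence no resonances) appear. -/
theorem mbll_locator_expansion_converges
    {Ω : Type*} [Fintype Ω] [DecidableEq Ω] [Nonempty Ω]
    (𝔈 : Ω → ℝ) (δ₀ : ℝ) (hδ₀ : 0 < δ₀) (h𝔈 : ∀ α, δ₀ ≤ 𝔈 α)
    (A : Matrix Ω Ω ℝ) (q : ℝ) (hq0 : 0 ≤ q) (hq1 : q < 1)
    (hA : ∀ α, ∑ β, |A α β| ≤ q * δ₀)
    (D : Matrix Ω Ω ℝ) (hD : D = Matrix.diagonal 𝔈) :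
    (∀ (n : ℕ) (α : Ω),
        |((D⁻¹ * (A * D⁻¹) ^ n) *ᵥ (fun _ => 1)) α| ≤ q ^ n / 𝔈 α) ∧
    IsUnit (D + A) ∧
    (∑' n : ℕ, ((-1 : ℝ) ^ n • ((D⁻¹ * (A * D⁻¹) ^ n) *ᵥ (fun _ => 1))))
      = (D + A)⁻¹ *ᵥ (fun _ => 1) := by
  have 𝔈_pos (α : Ω) : 0 < 𝔈 α := hδ₀.trans_le (h𝔈 α)
  have norm_𝔈 (α : Ω) : ‖𝔈 α‖ = 𝔈 α := Real.norm_of_nonneg (𝔈_pos α).le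
  obtain ⟨term_le, isUnit_add, hasSum⟩ := mbll_locator_expansion_converges_general
    (fun α ↦ (𝔈_pos α).ne') hq0 hq1 (A := A)
    (fun α ↦ sum_div_le_of_sum_le_mul hδ₀ (fun β _ ↦ (h𝔈 β).trans_eq (norm_𝔈 β).symm)
      (fun β _ ↦ norm_nonneg (A α β)) (hA α)) hD (fun _ ↦ 1)
  exact ⟨fun n α ↦ by simpa [norm_𝔈] using term_le n α, isUnit_add, hasSum.tsum_eq⟩
end
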